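/- Let Φ : 𝔻 → ℝ³ be a smooth conformal immersion with conformal factor λ, Gauss map n, mean curvature H and tracefree second fundamental form Å, and let Y : 𝔻 → ℝ⁵ be its conformal Gauss map. Then at every point of 𝔻: (i) ⟨Y, Y⟩_{4,1} = 1, i.e. Y takes values in the de Sitter space S^{4,1}; (ii) ⟨∂_xY, ∂_yY⟩_{4,1} = 0; and (iii) ⟨∂_xY, ∂_xY⟩_{4,1} = ⟨∂_yY, ∂_yY⟩_{4,1} = e^{−2λ}(Å_11² + Å_12²). In particular Y is a conformal map from 𝔻 into (ℝ⁵, ⟨·,·⟩_{4,1}) with conformal factor equal to half the pointwise conformal invariant |Åe^{−λ}|². -/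

import Mathlib

/-!
Write `V = (Φ, (|Φ|²-1)/2, (|Φ|²+1)/2)` and, for `u ∈ ℝ³`, `L u = (u, ⟨u,Φ⟩, ⟨u,Φ⟩)`. Then `V` is
lightlike, `V` is Lorentz-orthogonal to every `L u`, and `⟨L u, L v⟩ = ⟨u, v⟩`. As `Y = H V + L n`,
this gives `⟨Y, Y⟩ = |n|² = 1`. Moreover `∂V = L (∂Φ)`, and `∂(L n) = L (∂n)` because
`⟨n, ∂Φ⟩ = 0`, so `∂Y = (∂H) V + L (H ∂Φ + ∂n)` and
`⟨∂_i Y, ∂_j Y⟩ = ⟨H ∂_iΦ + ∂_i n, H ∂_jΦ + ∂_j n⟩` (`lorentz_of_coords`).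

The vectors `H ∂_iΦ + ∂_i n` are tangent, and differentiating `⟨n, ∂_jΦ⟩ = 0` shows that their
inner products with `∂_jΦ` are `H e^{2λ} δ_ij - A_ij = -Å_ij`. The Parseval identity in the
orthogonal frame `∂_xΦ, ∂_yΦ, n` (`frame_parseval`), the symmetry of `A`, and
`Å_22 = -Å_11` then give the three scalar products.
-/

open MeasureTheory Real
open scoped RealInnerProductSpace

noncomputable section

abbrev R2 : Type := ℝ × ℝ
abbrev R3 : Type := EuclideanSpace ℝ (Fin 3)
abbrev R5 : Type := EuclideanSpace ℝ (Fin 5)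

/-- The open disk of radius `ρ` centered at the origin in `ℝ²`. -/
def disk (ρ : ℝ) : Set R2 := Metric.ball 0 ρ

/-- Partial derivative in the `x`-direction. -/
def pdx {E : Type*} [NormedAddCommGroup E] [NormedSpace ℝ E] (f : R2 → E) (p : R2) : E :=
  fderiv ℝ f p (1, 0)

/-- Partial derivative in the `y`-direction. -/
def pdy {E : Type*} [NormedAddCommGroup E] [NormedSpace ℝ E] (f : R2 → E) (p : R2) : E :=
  fderiv ℝ f p (0, 1)

/-- The cross product in `ℝ³`. -/
def cross (u v : R3) : R3 :=
  (EuclideanSpace.equiv (Fin 3) ℝ).symm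
    ![u 1 * v 2 - u 2 * v 1, u 2 * v 0 - u 0 * v 2, u 0 * v 1 - u 1 * v 0]

/-- The Gauss map `n := (∂ₓΦ × ∂_yΦ)/|∂ₓΦ × ∂_yΦ|`. -/
def gaussMap (Φ : R2 → R3) (p : R2) : R3 :=
  ‖cross (pdx Φ p) (pdy Φ p)‖⁻¹ • cross (pdx Φ p) (pdy Φ p)

/-- The second derivative `∂_v ∂_w Φ`. -/
def d2 (Φ : R2 → R3) (v w : R2) (p : R2) : R3 :=
  fderiv ℝ (fun q => fderiv ℝ Φ q w) p v

/-- Entry of the second fundamental form `⟨∂_v ∂_w Φ, n⟩`. -/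
def sff (Φ : R2 → R3) (v w : R2) (p : R2) : ℝ :=
  ⟪d2 Φ v w p, gaussMap Φ p⟫

def ex : R2 := (1, 0)
def ey : R2 := (0, 1)

/-- The mean curvature `H := e^{-2λ}(A₁₁ + A₂₂)/2`. -/
def meanCurv (Φ : R2 → R3) (lam : R2 → ℝ) (p : R2) : ℝ :=
  Real.exp (-(2 * lam p)) * (sff Φ ex ex p + sff Φ ey ey p) / 2

/-- Entry `Å₁₁` of the tracefree second fundamental form. -/
def tf11 (Φ : R2 → R3) (lam : R2 → ℝ) (p : R2) : ℝ :=
  sff Φ ex ex p - meanCurv Φ lam p * Real.exp (2 * lam p)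

/-- Entry `Å₁₂`. -/
def tf12 (Φ : R2 → R3) (_lam : R2 → ℝ) (p : R2) : ℝ := sff Φ ex ey p

/-- Entry `Å₂₁`. -/
def tf21 (Φ : R2 → R3) (_lam : R2 → ℝ) (p : R2) : ℝ := sff Φ ey ex p

/-- Entry `Å₂₂`. -/
def tf22 (Φ : R2 → R3) (lam : R2 → ℝ) (p : R2) : ℝ :=
  sff Φ ey ey p - meanCurv Φ lam p * Real.exp (2 * lam p)

/-- `Å₁₁² + Å₁₂² + Å₂₁² + Å₂₂²`. -/
def tfNormSq (Φ : R2 → R3) (lam : R2 → ℝ) (p : R2) : ℝ :=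
  tf11 Φ lam p ^ 2 + tf12 Φ lam p ^ 2 + tf21 Φ lam p ^ 2 + tf22 Φ lam p ^ 2

/-- The pointwise quantity `|Å e^{-λ}|`. -/
def ringA (Φ : R2 → R3) (lam : R2 → ℝ) (p : R2) : ℝ :=
  Real.exp (-(lam p)) * Real.sqrt (tfNormSq Φ lam p)

/-- `Φ` is a smooth conformal immersion on `Ω` with conformal factor `lam`. -/
structure ConformalImmersion (Ω : Set R2) (Φ : R2 → R3) (lam : R2 → ℝ) : Prop where
  smooth : ContDiffOn ℝ (⊤ : ℕ∞) Φ Ω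
  smooth_lam : ContDiffOn ℝ (⊤ : ℕ∞) lam Ω
  orth : ∀ p ∈ Ω, ⟪pdx Φ p, pdy Φ p⟫ = 0
  norm_x : ∀ p ∈ Ω, ‖pdx Φ p‖ = Real.exp (lam p)
  norm_y : ∀ p ∈ Ω, ‖pdy Φ p‖ = Real.exp (lam p)

/-- The Willmore equation `ΔH + e^{-2λ}|Å|² H = 0` on `Ω`. -/
def IsWillmore (Φ : R2 → R3) (lam : R2 → ℝ) (Ω : Set R2) : Prop :=
  ∀ p ∈ Ω,
    pdx (pdx (meanCurv Φ lam)) p + pdy (pdy (meanCurv Φ lam)) p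
      + Real.exp (-(2 * lam p)) * tfNormSq Φ lam p * meanCurv Φ lam p = 0

/-- Pointwise norm of the gradient of a scalar function. -/
def gradNorm (f : R2 → ℝ) (p : R2) : ℝ := Real.sqrt (pdx f p ^ 2 + pdy f p ^ 2)

/-- Pointwise squared norm of the gradient of a vector-valued function. -/
def gradSqV {E : Type*} [NormedAddCommGroup E] [NormedSpace ℝ E] (f : R2 → E) (p : R2) : ℝ :=
  ‖pdx f p‖ ^ 2 + ‖pdy f p‖ ^ 2

/-- The `L²(Ω)` norm of a scalar function. -/
def l2norm (f : R2 → ℝ) (Ω : Set R2) : ℝ := Real.sqrt (∫ p in Ω, f p ^ 2)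

/-- `‖f‖_{L^{2,∞}(Ω)} ≤ M`, i.e. `sup_{α>0} α |{|f|>α}|^{1/2} ≤ M`. -/
def wl2le (f : R2 → ℝ) (Ω : Set R2) (M : ℝ) : Prop :=
  ∀ α > (0:ℝ), α * Real.sqrt ((volume {p ∈ Ω | α < |f p|}).toReal) ≤ M

/-- The Lorentz product on `ℝ⁵ = ℝ^{4,1}`. -/
def lorentz (v w : R5) : ℝ :=
  v 0 * w 0 + v 1 * w 1 + v 2 * w 2 + v 3 * w 3 - v 4 * w 4

/-- The conformal Gauss map `Y := H (Φ, (|Φ|²-1)/2, (|Φ|²+1)/2) + (n, ⟨n,Φ⟩, ⟨n,Φ⟩)`. -/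
def confGauss (Φ : R2 → R3) (lam : R2 → ℝ) (p : R2) : R5 :=
  (EuclideanSpace.equiv (Fin 5) ℝ).symm
    ![meanCurv Φ lam p * Φ p 0 + gaussMap Φ p 0,
      meanCurv Φ lam p * Φ p 1 + gaussMap Φ p 1,
      meanCurv Φ lam p * Φ p 2 + gaussMap Φ p 2,
      meanCurv Φ lam p * ((‖Φ p‖ ^ 2 - 1) / 2) + ⟪gaussMap Φ p, Φ p⟫,
      meanCurv Φ lam p * ((‖Φ p‖ ^ 2 + 1) / 2) + ⟪gaussMap Φ p, Φ p⟫]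

/-- Elementary Möbius pieces: isometries, dilations, inversions. -/
inductive MobiusPiece : (R3 → R3) → Prop
  | isom (e : R3 ≃ᵢ R3) : MobiusPiece (fun x => e x)
  | dil (r : ℝ) (hr : 0 < r) : MobiusPiece (fun x => r • x)
  | inv (a : R3) : MobiusPiece (fun x => (‖x - a‖ ^ 2)⁻¹ • (x - a))

/-- A Möbius transformation of `ℝ³`: a finite composition of isometries, dilations and
inversions. -/
inductive IsMobius : (R3 → R3) → Prop
  | id : IsMobius id
  | comp {f g : R3 → R3} : MobiusPiece f → IsMobius g → IsMobius (f ∘ g)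

/-! ### Euclidean and Lorentzian linear algebra -/

lemma inner_three (u v : R3) : ⟪u, v⟫ = u 0 * v 0 + u 1 * v 1 + u 2 * v 2 := by
  simp [PiLp.inner_apply, Fin.sum_univ_three]
  ring

lemma cross_zero (u v : R3) : cross u v 0 = u 1 * v 2 - u 2 * v 1 := rfl

lemma cross_one (u v : R3) : cross u v 1 = u 2 * v 0 - u 0 * v 2 := rfl

lemma cross_two (u v : R3) : cross u v 2 = u 0 * v 1 - u 1 * v 0 := rfl

lemma cross_orth_left (u v : R3) : ⟪cross u v, u⟫ = 0 := by
  simp only [inner_three, cross_zero, cross_one, cross_two]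
  ring

lemma cross_orth_right (u v : R3) : ⟪cross u v, v⟫ = 0 := by
  simp only [inner_three, cross_zero, cross_one, cross_two]
  ring

/-- The Gram determinant identity `det(a,b,u) det(a,b,v) = det Gram((a,b,u),(a,b,v))`. -/
lemma inner_cross_mul_inner_cross (a b u v : R3) :
    ⟪u, cross a b⟫ * ⟪v, cross a b⟫ =
      ⟪a, a⟫ * (⟪b, b⟫ * ⟪u, v⟫ - ⟪u, b⟫ * ⟪v, b⟫)
        - ⟪a, b⟫ * (⟪a, b⟫ * ⟪u, v⟫ - ⟪v, b⟫ * ⟪u, a⟫)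
        + ⟪v, a⟫ * (⟪a, b⟫ * ⟪u, b⟫ - ⟪b, b⟫ * ⟪u, a⟫) := by
  simp only [inner_three, cross_zero, cross_one, cross_two]
  ring

/-- Lagrange's identity `|a × b|² = |a|²|b|² - ⟨a,b⟩²`. -/
lemma inner_cross_self (a b : R3) :
    ⟪cross a b, cross a b⟫ = ⟪a, a⟫ * ⟪b, b⟫ - ⟪a, b⟫ ^ 2 := by
  simp only [inner_three, cross_zero, cross_one, cross_two]
  ring

/-- Parseval's identity for a vector `u` in the span of orthogonal `a, b` of common squared
length `E`. -/
lemma frame_parseval {a b u v : R3} {E : ℝ} (hE : E ≠ 0) (ha : ⟪a, a⟫ = E) (hb : ⟪b, b⟫ = E)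
    (hab : ⟪a, b⟫ = 0) (hu : ⟪u, cross a b⟫ = 0) :
    ⟪u, v⟫ = E⁻¹ * (⟪u, a⟫ * ⟪v, a⟫ + ⟪u, b⟫ * ⟪v, b⟫) := by
  have := inner_cross_mul_inner_cross a b u v
  rw [hu, ha, hb, hab] at this
  field_simp
  apply mul_left_cancel₀ hE
  linear_combination -this

/-- Vectors of the form `c V + L u` in `ℝ⁵`, where `V = (x, (|x|²-1)/2, (|x|²+1)/2)` and
`L u = (u, ⟨u,x⟩, ⟨u,x⟩)`, have Lorentz product given by the Euclidean product of the `u`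
parts. -/
lemma lorentz_of_coords {x u₁ u₂ : R3} {c₁ c₂ : ℝ} {y₁ y₂ : R5}
    (h₁ : y₁ 0 = c₁ * x 0 + u₁ 0 ∧ y₁ 1 = c₁ * x 1 + u₁ 1 ∧ y₁ 2 = c₁ * x 2 + u₁ 2 ∧
      y₁ 3 = c₁ * ((‖x‖ ^ 2 - 1) / 2) + ⟪u₁, x⟫ ∧ y₁ 4 = c₁ * ((‖x‖ ^ 2 + 1) / 2) + ⟪u₁, x⟫)
    (h₂ : y₂ 0 = c₂ * x 0 + u₂ 0 ∧ y₂ 1 = c₂ * x 1 + u₂ 1 ∧ y₂ 2 = c₂ * x 2 + u₂ 2 ∧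
      y₂ 3 = c₂ * ((‖x‖ ^ 2 - 1) / 2) + ⟪u₂, x⟫ ∧ y₂ 4 = c₂ * ((‖x‖ ^ 2 + 1) / 2) + ⟪u₂, x⟫) :
    lorentz y₁ y₂ = ⟪u₁, u₂⟫ := by
  obtain ⟨a0, a1, a2, a3, a4⟩ := h₁
  obtain ⟨b0, b1, b2, b3, b4⟩ := h₂
  rw [lorentz, a0, a1, a2, a3, a4, b0, b1, b2, b3, b4, ← real_inner_self_eq_norm_sq]
  simp only [inner_three]
  ring

/-! ### The derivative of the conformal Gauss map -/

lemma fderiv_coord {ι : Type*} [Fintype ι] {f : R2 → EuclideanSpace ℝ ι} {p : R2}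
    (hf : DifferentiableAt ℝ f p) (w : R2) (i : ι) :
    (fderiv ℝ f p w) i = fderiv ℝ (fun q => f q i) p w := by
  have h := ((EuclideanSpace.proj (𝕜 := ℝ) (ι := ι) i).hasFDerivAt.comp p
    hf.hasFDerivAt).fderiv
  have h' : (⇑(EuclideanSpace.proj (𝕜 := ℝ) (ι := ι) i) ∘ f) = fun q => f q i := rfl
  rw [h'] at h
  rw [h]
  rfl

lemma differentiableAt_coord {ι : Type*} [Fintype ι] {f : R2 → EuclideanSpace ℝ ι} {p : R2}
    (hf : DifferentiableAt ℝ f p) (i : ι) : DifferentiableAt ℝ (fun q => f q i) p :=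
  (EuclideanSpace.proj (𝕜 := ℝ) (ι := ι) i).differentiableAt.comp p hf

/-- The decomposition `∂Y = (∂H) V + L (H ∂Φ + ∂n)`, in coordinates. -/
lemma fderiv_confGauss {Φ : R2 → R3} {lam : R2 → ℝ} {p : R2} (w : R2)
    (hΦ : DifferentiableAt ℝ Φ p) (hn : DifferentiableAt ℝ (gaussMap Φ) p)
    (hH : DifferentiableAt ℝ (meanCurv Φ lam) p) (hw : ⟪gaussMap Φ p, fderiv ℝ Φ p w⟫ = 0) :
    let y := fderiv ℝ (confGauss Φ lam) p w
    let c := fderiv ℝ (meanCurv Φ lam) p w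
    let u := meanCurv Φ lam p • fderiv ℝ Φ p w + fderiv ℝ (gaussMap Φ) p w
    y 0 = c * Φ p 0 + u 0 ∧ y 1 = c * Φ p 1 + u 1 ∧ y 2 = c * Φ p 2 + u 2 ∧
      y 3 = c * ((‖Φ p‖ ^ 2 - 1) / 2) + ⟪u, Φ p⟫ ∧
      y 4 = c * ((‖Φ p‖ ^ 2 + 1) / 2) + ⟪u, Φ p⟫ := by
  intro y c u
  have hlin (i : Fin 3) : HasFDerivAt (fun q => meanCurv Φ lam q * Φ q i + gaussMap Φ q i)
      _ p := (hH.hasFDerivAt.mul (differentiableAt_coord hΦ i).hasFDerivAt).add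
        (differentiableAt_coord hn i).hasFDerivAt
  have hquad (s : ℝ) : HasFDerivAt
      (fun q => meanCurv Φ lam q * ((‖Φ q‖ ^ 2 + s) * 2⁻¹) + ⟪gaussMap Φ q, Φ q⟫) _ p :=
    (hH.hasFDerivAt.mul ((hΦ.hasFDerivAt.norm_sq.add_const s).mul_const 2⁻¹)).add
      (hn.hasFDerivAt.inner ℝ hΦ.hasFDerivAt)
  have hY : DifferentiableAt ℝ (confGauss Φ lam) p := by
    refine (EuclideanSpace.equiv (Fin 5) ℝ).symm.differentiableAt.comp p ?_
    rw [differentiableAt_pi]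
    intro i
    fin_cases i
    · exact (hlin 0).differentiableAt
    · exact (hlin 1).differentiableAt
    · exact (hlin 2).differentiableAt
    · simpa [sub_eq_add_neg, div_eq_mul_inv] using (hquad (-1)).differentiableAt
    · simpa [div_eq_mul_inv] using (hquad 1).differentiableAt
  have hy (i : Fin 5) : y i = fderiv ℝ (fun q => confGauss Φ lam q i) p w := fderiv_coord hY w i
  have e0 : (fun q => confGauss Φ lam q 0) =
      fun q => meanCurv Φ lam q * Φ q 0 + gaussMap Φ q 0 := rfl
  have e1 : (fun q => confGauss Φ lam q 1) =
      fun q => meanCurv Φ lam q * Φ q 1 + gaussMap Φ q 1 := rfl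
  have e2 : (fun q => confGauss Φ lam q 2) =
      fun q => meanCurv Φ lam q * Φ q 2 + gaussMap Φ q 2 := rfl
  have e3 : (fun q => confGauss Φ lam q 3) =
      fun q => meanCurv Φ lam q * ((‖Φ q‖ ^ 2 + -1) * 2⁻¹) + ⟪gaussMap Φ q, Φ q⟫ := rfl
  have e4 : (fun q => confGauss Φ lam q 4) =
      fun q => meanCurv Φ lam q * ((‖Φ q‖ ^ 2 + 1) * 2⁻¹) + ⟪gaussMap Φ q, Φ q⟫ := rfl
  refine ⟨?_, ?_, ?_, ?_, ?_⟩
  · rw [hy, e0, (hlin 0).fderiv]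
    simp [u, c, fderiv_coord hΦ, fderiv_coord hn]
    ring
  · rw [hy, e1, (hlin 1).fderiv]
    simp [u, c, fderiv_coord hΦ, fderiv_coord hn]
    ring
  · rw [hy, e2, (hlin 2).fderiv]
    simp [u, c, fderiv_coord hΦ, fderiv_coord hn]
    ring
  · rw [hy, e3, (hquad (-1)).fderiv]
    simp [u, c, hw, inner_add_right, inner_smul_right, real_inner_comm (Φ p)]
    ring
  · rw [hy, e4, (hquad 1).fderiv]
    simp [u, c, hw, inner_add_right, inner_smul_right, real_inner_comm (Φ p)]
    ring

/-! ### The Gauss map and second fundamental form of a conformal immersion -/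

section Immersion

variable {Φ : R2 → R3} {lam : R2 → ℝ} {p : R2}

lemma ConformalImmersion.inner_xx (h : ConformalImmersion (disk 1) Φ lam) (hp : p ∈ disk 1) :
    ⟪pdx Φ p, pdx Φ p⟫ = Real.exp (2 * lam p) := by
  rw [real_inner_self_eq_norm_sq, h.norm_x p hp, ← Real.exp_nat_mul]
  norm_num

lemma ConformalImmersion.inner_yy (h : ConformalImmersion (disk 1) Φ lam) (hp : p ∈ disk 1) :
    ⟪pdy Φ p, pdy Φ p⟫ = Real.exp (2 * lam p) := by
  rw [real_inner_self_eq_norm_sq, h.norm_y p hp, ← Real.exp_nat_mul]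
  norm_num

lemma ConformalImmersion.cross_ne_zero (h : ConformalImmersion (disk 1) Φ lam)
    (hp : p ∈ disk 1) : cross (pdx Φ p) (pdy Φ p) ≠ 0 := by
  intro h0
  have := inner_cross_self (pdx Φ p) (pdy Φ p)
  rw [h0, h.inner_xx hp, h.inner_yy hp, h.orth p hp, inner_zero_left] at this
  have := Real.exp_pos (2 * lam p)
  nlinarith

lemma ConformalImmersion.contDiffAt (h : ConformalImmersion (disk 1) Φ lam) (hp : p ∈ disk 1) :
    ContDiffAt ℝ (⊤ : ℕ∞) Φ p :=
  h.smooth.contDiffAt (Metric.isOpen_ball.mem_nhds hp)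

lemma ConformalImmersion.contDiffAt_fderiv (h : ConformalImmersion (disk 1) Φ lam)
    (hp : p ∈ disk 1) (w : R2) : ContDiffAt ℝ (⊤ : ℕ∞) (fun q => fderiv ℝ Φ q w) p :=
  ((h.contDiffAt hp).fderiv_right (m := (⊤ : ℕ∞)) (by simp)).clm_apply contDiffAt_const

lemma ConformalImmersion.contDiffAt_d2 (h : ConformalImmersion (disk 1) Φ lam)
    (hp : p ∈ disk 1) (v w : R2) : ContDiffAt ℝ (⊤ : ℕ∞) (d2 Φ v w) p :=
  ((h.contDiffAt_fderiv hp w).fderiv_right (m := (⊤ : ℕ∞)) (by simp)).clm_apply contDiffAt_const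

lemma ConformalImmersion.differentiableAt_gaussMap (h : ConformalImmersion (disk 1) Φ lam)
    (hp : p ∈ disk 1) : DifferentiableAt ℝ (gaussMap Φ) p := by
  have hx : DifferentiableAt ℝ (pdx Φ) p :=
    (h.contDiffAt_fderiv hp (1, 0)).differentiableAt (by simp)
  have hy : DifferentiableAt ℝ (pdy Φ) p :=
    (h.contDiffAt_fderiv hp (0, 1)).differentiableAt (by simp)
  have hc : DifferentiableAt ℝ (fun q => cross (pdx Φ q) (pdy Φ q)) p := by
    refine (EuclideanSpace.equiv (Fin 3) ℝ).symm.differentiableAt.comp p ?_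
    have dx := differentiableAt_coord hx
    have dy := differentiableAt_coord hy
    rw [differentiableAt_pi]
    intro i
    fin_cases i
    · exact ((dx 1).mul (dy 2)).sub ((dx 2).mul (dy 1))
    · exact ((dx 2).mul (dy 0)).sub ((dx 0).mul (dy 2))
    · exact ((dx 0).mul (dy 1)).sub ((dx 1).mul (dy 0))
  have h0 := h.cross_ne_zero hp
  exact ((hc.norm ℝ h0).inv (norm_ne_zero_iff.mpr h0)).smul hc

lemma ConformalImmersion.differentiableAt_meanCurv (h : ConformalImmersion (disk 1) Φ lam)
    (hp : p ∈ disk 1) : DifferentiableAt ℝ (meanCurv Φ lam) p := by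
  have hl : DifferentiableAt ℝ lam p :=
    (h.smooth_lam.contDiffAt (Metric.isOpen_ball.mem_nhds hp)).differentiableAt (by simp)
  have hA (v : R2) : DifferentiableAt ℝ (sff Φ v v) p :=
    ((h.contDiffAt_d2 hp v v).differentiableAt (by simp)).inner ℝ (h.differentiableAt_gaussMap hp)
  have h1 := hA ex
  have h2 := hA ey
  unfold meanCurv
  fun_prop

lemma gaussMap_inner_pdx (p : R2) : ⟪gaussMap Φ p, pdx Φ p⟫ = 0 := by
  rw [gaussMap, inner_smul_left, cross_orth_left, mul_zero]

lemma gaussMap_inner_pdy (p : R2) : ⟪gaussMap Φ p, pdy Φ p⟫ = 0 := by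
  rw [gaussMap, inner_smul_left, cross_orth_right, mul_zero]

lemma ConformalImmersion.gaussMap_inner_self (h : ConformalImmersion (disk 1) Φ lam)
    (hp : p ∈ disk 1) : ⟪gaussMap Φ p, gaussMap Φ p⟫ = 1 := by
  have := norm_ne_zero_iff.mpr (h.cross_ne_zero hp)
  rw [gaussMap, real_inner_self_eq_norm_sq, norm_smul, norm_inv, norm_norm,
    inv_mul_cancel₀ this, one_pow]

/-- Weingarten relation, from differentiating `⟨n, ∂_wΦ⟩ = 0` in direction `v`. -/
lemma ConformalImmersion.weingarten (h : ConformalImmersion (disk 1) Φ lam)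
    (hp : p ∈ disk 1) (v w : R2) (hw : ∀ q, ⟪gaussMap Φ q, fderiv ℝ Φ q w⟫ = 0) :
    ⟪fderiv ℝ (gaussMap Φ) p v, fderiv ℝ Φ p w⟫ = -sff Φ v w p := by
  have hd := fderiv_inner_apply ℝ (h.differentiableAt_gaussMap hp)
    ((h.contDiffAt_fderiv hp w).differentiableAt (by simp)) v
  simp only [hw] at hd
  simp only [fderiv_fun_const, Pi.zero_apply, zero_apply] at hd
  rw [sff, d2, real_inner_comm]
  rw [real_inner_comm] at hd
  linarith [real_inner_comm (fderiv ℝ Φ p w) (fderiv ℝ (gaussMap Φ) p v),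
    real_inner_comm (gaussMap Φ p) (fderiv ℝ (fun q => fderiv ℝ Φ q w) p v)]

/-- `∂n` is tangent to the surface, since `|n|² = 1` on the disk. -/
lemma ConformalImmersion.fderiv_gaussMap_inner (h : ConformalImmersion (disk 1) Φ lam)
    (hp : p ∈ disk 1) (v : R2) : ⟪fderiv ℝ (gaussMap Φ) p v, gaussMap Φ p⟫ = 0 := by
  have hn := h.differentiableAt_gaussMap hp
  have hd := fderiv_inner_apply ℝ hn hn v
  have hev : (fun q => ⟪gaussMap Φ q, gaussMap Φ q⟫) =ᶠ[nhds p] fun _ => (1 : ℝ) := by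
    filter_upwards [Metric.isOpen_ball.mem_nhds hp] with q hq using h.gaussMap_inner_self hq
  rw [hev.fderiv_eq] at hd
  simp only [fderiv_fun_const, Pi.zero_apply, zero_apply] at hd
  rw [real_inner_comm (fderiv ℝ (gaussMap Φ) p v)] at hd
  linarith [real_inner_comm (fderiv ℝ (gaussMap Φ) p v) (gaussMap Φ p)]

/-- Symmetry of the second fundamental form, from the symmetry of second derivatives. -/
lemma ConformalImmersion.sff_symm (h : ConformalImmersion (disk 1) Φ lam)
    (hp : p ∈ disk 1) (v w : R2) : sff Φ v w p = sff Φ w v p := by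
  have hs : IsSymmSndFDerivAt ℝ Φ p := (h.contDiffAt hp).isSymmSndFDerivAt
    (by simpa using WithTop.coe_le_coe.mpr (le_top : (2 : ℕ∞) ≤ ⊤))
  have hd : DifferentiableAt ℝ (fderiv ℝ Φ) p :=
    ((h.contDiffAt hp).fderiv_right (m := (⊤ : ℕ∞)) (by simp)).differentiableAt (by simp)
  have key (v w : R2) : d2 Φ v w p = fderiv ℝ (fderiv ℝ Φ) p v w := by
    rw [d2, fderiv_clm_apply hd (differentiableAt_const w)]
    simp
  rw [sff, sff, key, key, hs.eq]

end Immersion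

/-- The conformal Gauss map takes values in the de Sitter space and is conformal with
conformal factor `|Åe^{-λ}|²/2` (Proposition `230520200838`). -/
theorem confGauss_conformal (Φ : R2 → R3) (lam : R2 → ℝ)
    (h : ConformalImmersion (disk 1) Φ lam) :
    ∀ p ∈ disk 1,
      lorentz (confGauss Φ lam p) (confGauss Φ lam p) = 1 ∧
      lorentz (pdx (confGauss Φ lam) p) (pdy (confGauss Φ lam) p) = 0 ∧
      lorentz (pdx (confGauss Φ lam) p) (pdx (confGauss Φ lam) p)
        = Real.exp (-(2 * lam p)) * (tf11 Φ lam p ^ 2 + tf12 Φ lam p ^ 2) ∧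
      lorentz (pdy (confGauss Φ lam) p) (pdy (confGauss Φ lam) p)
        = Real.exp (-(2 * lam p)) * (tf11 Φ lam p ^ 2 + tf12 Φ lam p ^ 2) := by
  intro p hp
  have hΦ : DifferentiableAt ℝ Φ p := (h.contDiffAt hp).differentiableAt (by simp)
  have hn := h.differentiableAt_gaussMap hp
  have hH := h.differentiableAt_meanCurv hp
  have cx := fderiv_confGauss (1, 0) hΦ hn hH (gaussMap_inner_pdx p)
  have cy := fderiv_confGauss (0, 1) hΦ hn hH (gaussMap_inner_pdy p)
  have hE : Real.exp (2 * lam p) ≠ 0 := Real.exp_ne_zero _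
  have hxx := h.inner_xx hp
  have hyy := h.inner_yy hp
  have hxy := h.orth p hp
  have hyx : ⟪pdy Φ p, pdx Φ p⟫ = 0 := by rw [real_inner_comm, hxy]
  have w11 := h.weingarten hp ex ex gaussMap_inner_pdx
  have w12 := h.weingarten hp ex ey gaussMap_inner_pdy
  have w21 := h.weingarten hp ey ex gaussMap_inner_pdx
  have w22 := h.weingarten hp ey ey gaussMap_inner_pdy
  rw [h.sff_symm hp ey ex] at w21
  change ⟪pdx (gaussMap Φ) p, pdx Φ p⟫ = _ at w11
  change ⟪pdx (gaussMap Φ) p, pdy Φ p⟫ = _ at w12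
  change ⟪pdy (gaussMap Φ) p, pdx Φ p⟫ = _ at w21
  change ⟪pdy (gaussMap Φ) p, pdy Φ p⟫ = _ at w22
  set ux : R3 := meanCurv Φ lam p • pdx Φ p + pdx (gaussMap Φ) p with hux
  set uy : R3 := meanCurv Φ lam p • pdy Φ p + pdy (gaussMap Φ) p with huy
  have ux1 : ⟪ux, pdx Φ p⟫ = -tf11 Φ lam p := by
    rw [hux, inner_add_left, real_inner_smul_left, hxx, w11, tf11]
    ring
  have ux2 : ⟪ux, pdy Φ p⟫ = -tf12 Φ lam p := by
    rw [hux, inner_add_left, real_inner_smul_left, hxy, w12, tf12]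
    ring
  have uy1 : ⟪uy, pdx Φ p⟫ = -tf12 Φ lam p := by
    rw [huy, inner_add_left, real_inner_smul_left, hyx, w21, tf12]
    ring
  -- The trace of `Å` vanishes, so this product is `-Å₂₂ = Å₁₁`.
  have uy2 : ⟪uy, pdy Φ p⟫ = tf11 Φ lam p := by
    have hHE : meanCurv Φ lam p * Real.exp (2 * lam p) =
        (sff Φ ex ex p + sff Φ ey ey p) / 2 := by
      rw [meanCurv, Real.exp_neg]
      field_simp
    rw [huy, inner_add_left, real_inner_smul_left, hyy, w22, tf11]
    linarith
  have nx : ⟪pdx (gaussMap Φ) p, gaussMap Φ p⟫ = 0 := h.fderiv_gaussMap_inner hp (1, 0)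
  have ny : ⟪pdy (gaussMap Φ) p, gaussMap Φ p⟫ = 0 := h.fderiv_gaussMap_inner hp (0, 1)
  have hcross : cross (pdx Φ p) (pdy Φ p) =
      ‖cross (pdx Φ p) (pdy Φ p)‖ • gaussMap Φ p := by
    rw [gaussMap, smul_inv_smul₀ (norm_ne_zero_iff.mpr (h.cross_ne_zero hp))]
  have tx : ⟪ux, cross (pdx Φ p) (pdy Φ p)⟫ = 0 := by
    rw [hcross, real_inner_smul_right, hux, inner_add_left, real_inner_smul_left,
      real_inner_comm, gaussMap_inner_pdx, nx]
    ring
  have ty : ⟪uy, cross (pdx Φ p) (pdy Φ p)⟫ = 0 := by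
    rw [hcross, real_inner_smul_right, huy, inner_add_left, real_inner_smul_left,
      real_inner_comm, gaussMap_inner_pdy, ny]
    ring
  refine ⟨?_, ?_, ?_, ?_⟩
  · rw [← h.gaussMap_inner_self hp]
    exact lorentz_of_coords (x := Φ p) (c₁ := meanCurv Φ lam p) (c₂ := meanCurv Φ lam p)
      ⟨rfl, rfl, rfl, rfl, rfl⟩ ⟨rfl, rfl, rfl, rfl, rfl⟩
  · refine (lorentz_of_coords cx cy).trans ?_
    change ⟪ux, uy⟫ = 0
    rw [frame_parseval hE hxx hyy hxy tx, ux1, ux2, uy1, uy2]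
    ring
  · refine (lorentz_of_coords cx cx).trans ?_
    change ⟪ux, ux⟫ = _
    rw [frame_parseval hE hxx hyy hxy tx, ux1, ux2, Real.exp_neg]
    ring
  · refine (lorentz_of_coords cy cy).trans ?_
    change ⟪uy, uy⟫ = _
    rw [frame_parseval hE hxx hyy hxy ty, uy1, uy2, Real.exp_neg]
    ring

end
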